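/- Let Y be a nonempty finite type, let d₁, d₀ : Y → ℝ be probability mass functions on Y (nonnegative, each summing to 1), and let f, n : Y → ℝ be everywhere-positive probability mass functions on Y. Define the data joint μ on Bool × Y × Y by μ(true, y₁, y₂) = (1/2)·d₁(y₁)·d₀(y₂) and μ(false, y₁, y₂) = (1/2)·d₀(y₁)·d₁(y₂), and define the model posterior q(true | y₁, y₂) = f(y₁)·n(y₂) / (f(y₁)·n(y₂) + n(y₁)·f(y₂)) and q(false | y₁, y₂) = n(y₁)·f(y₂) / (f(y₁)·n(y₂) + n(y₁)·f(y₂)). Then ∑_{c ∈ Bool} ∑_{y₁, y₂ ∈ Y} μ(c, y₁, y₂) · log q(c | y₁, y₂) = ∑_{y⁺, y⁻ ∈ Y} d₁(y⁺)·d₀(y⁻) · log σ( log( f(y⁺)·n(y⁻) / (f(y⁻)·n(y⁺)) ) ), where σ(t) = 1/(1 + exp(−t)). (This is the expectation-level equivalence asserted in the paper's Theorem 1: under the constraints p^θ(y|x,c=0) = p^prior(y|x) and p^θ(c|x) = 1/2, the constrained MLE objective E[log p^θ(c | x, (y^c, y^{¬c}))] coincides with the DPO objective E[log σ(r^θ(y⁺,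 y⁻, x))].) -/

import Mathlib

/-- The logistic (sigmoid) function σ(t) = 1/(1 + exp(−t)). -/
noncomputable def logistic (t : ℝ) : ℝ := 1 / (1 + Real.exp (-t))

/-!
Exchanging the two responses together with the label `c` preserves both the balanced data joint
and the label posterior, so the two labels contribute equally to the likelihood. On `c = true`, the
posterior `a / (a + b)` is the logistic function of its log odds `log (a / b)`, which is the reward.
-/

theorem logistic_log_div {a b : ℝ} (ha : 0 < a) (hb : 0 < b) :
    logistic (Real.log (a / b)) = a / (a + b) := by
  rw [logistic, Real.exp_neg, Real.exp_log (div_pos ha hb)]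
  field_simp

theorem hasSum_bool_prod {α M : Type*} [AddCommMonoid M] [TopologicalSpace M] [ContinuousAdd M]
    {F : Bool × α → M} {S T : M} (hfalse : HasSum (fun x ↦ F (false, x)) S)
    (htrue : HasSum (fun x ↦ F (true, x)) T) : HasSum F (S + T) :=
  (Equiv.boolProdEquivSum α).symm.hasSum_iff.mp (hfalse.sum htrue)

theorem hasSum_bool_prod_of_swap {α M : Type*} [AddCommMonoid M] [TopologicalSpace M]
    [ContinuousAdd M] {F : Bool × α × α → M} {S : M}
    (hswap : ∀ p : α × α, F (false, p) = F (true, p.swap))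
    (htrue : HasSum (fun p ↦ F (true, p)) S) : HasSum F (S + S) := by
  refine hasSum_bool_prod ?_ htrue
  simp only [hswap]
  exact (Equiv.prodComm α α).hasSum_iff.mpr htrue

/-- `w` is the joint weight of the (positive, negative) pairs, and `s y₁ y₂` the model weight for
`y₁` being the positive response; in `stmt_2` these are `d₁ y₁ * d₀ y₂` and `f y₁ * n y₂`. -/
theorem stmt_2_general {Y : Type*} (w s : Y → Y → ℝ) (hs_pos : ∀ y₁ y₂, 0 < s y₁ y₂)
    (μ q : Bool → Y → Y → ℝ)
    (hμt : ∀ y₁ y₂, μ true y₁ y₂ = 1 / 2 * w y₁ y₂)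
    (hμf : ∀ y₁ y₂, μ false y₁ y₂ = 1 / 2 * w y₂ y₁)
    (hqt : ∀ y₁ y₂, q true y₁ y₂ = s y₁ y₂ / (s y₁ y₂ + s y₂ y₁))
    (hqf : ∀ y₁ y₂, q false y₁ y₂ = s y₂ y₁ / (s y₁ y₂ + s y₂ y₁)) {S : ℝ}
    (hS : HasSum (fun p : Y × Y ↦
      w p.1 p.2 * Real.log (logistic (Real.log (s p.1 p.2 / s p.2 p.1)))) S) :
    HasSum (fun t : Bool × Y × Y ↦ μ t.1 t.2.1 t.2.2 * Real.log (q t.1 t.2.1 t.2.2)) S := by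
  have hμ_swap (y₁ y₂) : μ false y₁ y₂ = μ true y₂ y₁ := by rw [hμf, hμt]
  have hq_swap (y₁ y₂) : q false y₁ y₂ = q true y₂ y₁ := by rw [hqf, hqt, add_comm]
  have hq_logistic (y₁ y₂) : q true y₁ y₂ = logistic (Real.log (s y₁ y₂ / s y₂ y₁)) := by
    rw [hqt, logistic_log_div (hs_pos y₁ y₂) (hs_pos y₂ y₁)]
  have htrue : HasSum (fun p : Y × Y ↦ μ true p.1 p.2 * Real.log (q true p.1 p.2)) (1 / 2 * S) := by
    simpa only [hμt, hq_logistic, mul_assoc] using hS.mul_left (1 / 2)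
  rw [← add_halves S, ← one_div_mul_eq_div]
  refine hasSum_bool_prod_of_swap (fun p ↦ ?_) htrue
  simp only [hμ_swap, hq_swap, Prod.fst_swap, Prod.snd_swap]

/-- Expectation-level equivalence asserted in the paper's Theorem 1: under the prior
constraint `p^θ(y|x,c=0) = p^prior(y|x)` and the balanced class prior, the constrained
MLE objective `E[log p^θ(c | x, (y^c, y^{¬c}))]` coincides with the DPO objective
`E[log σ(r^θ(y⁺, y⁻, x))]`. -/
theorem stmt_2 {Y : Type*} [Fintype Y] [Nonempty Y]
    (d₁ d₀ f n : Y → ℝ)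
    (hd₁_nonneg : ∀ y, 0 ≤ d₁ y) (hd₁_sum : ∑ y, d₁ y = 1)
    (hd₀_nonneg : ∀ y, 0 ≤ d₀ y) (hd₀_sum : ∑ y, d₀ y = 1)
    (hf_pos : ∀ y, 0 < f y) (hf_sum : ∑ y, f y = 1)
    (hn_pos : ∀ y, 0 < n y) (hn_sum : ∑ y, n y = 1)
    (μ : Bool → Y → Y → ℝ) (q : Bool → Y → Y → ℝ)
    (hμt : ∀ y₁ y₂, μ true y₁ y₂ = (1 / 2) * d₁ y₁ * d₀ y₂)
    (hμf : ∀ y₁ y₂, μ false y₁ y₂ = (1 / 2) * d₀ y₁ * d₁ y₂)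
    (hqt : ∀ y₁ y₂, q true y₁ y₂ = f y₁ * n y₂ / (f y₁ * n y₂ + n y₁ * f y₂))
    (hqf : ∀ y₁ y₂, q false y₁ y₂ = n y₁ * f y₂ / (f y₁ * n y₂ + n y₁ * f y₂)) :
    (∑ c : Bool, ∑ y₁ : Y, ∑ y₂ : Y, μ c y₁ y₂ * Real.log (q c y₁ y₂)) =
      ∑ yp : Y, ∑ ym : Y,
        d₁ yp * d₀ ym * Real.log (logistic (Real.log (f yp * n ym / (f ym * n yp)))) := by
  simpa only [Fintype.sum_prod_type] using (hasSum_fintype _).unique <|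
    stmt_2_general (fun y₁ y₂ ↦ d₁ y₁ * d₀ y₂) (fun y₁ y₂ ↦ f y₁ * n y₂)
      (fun y₁ y₂ ↦ mul_pos (hf_pos y₁) (hn_pos y₂)) μ q
      (by grind) (by grind) (by grind) (by grind) (hasSum_fintype _)
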